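/- Let 𝒳 be a complex Banach space and T > 0. An evolution family on [0,T] is a two-parameter family of bounded linear operators U(t,s) : 𝒳 → 𝒳, defined for 0 ≤ s ≤ t ≤ T, such that U(t,r)U(r,s) = U(t,s) for all 0 ≤ s ≤ r ≤ t ≤ T, U(s,s) = I for all s ∈ [0,T], and (t,s) ↦ U(t,s)x is continuous for every x ∈ 𝒳; set M₀ = sup_{0 ≤ s ≤ t ≤ T} ‖U(t,s)‖ and assume M₀ < ∞. Let F : [0,T] × 𝒳 → 𝒳 be continuous with F(t,0) = 0 for all t, and assume that for every τ ∈ (0,T] and ρ > 0 there is L_{τ,ρ} ≥ 0, nondecreasing in both τ and ρ, with ‖F(t,x) − F(t,y)‖ ≤ L_{τ,ρ}‖x − y‖ for all t ∈ [0,τ] and all x, y with ‖x‖ ≤ ρ, ‖y‖ ≤ ρ. A mild solution with initial datum X₀ on an interval I containing 0 is a continuous X : I → 𝒳 with X(t) = U(t,0)X₀ + ∫₀ᵗ U(t,s)F(s, X(s)) ds for all t ∈ I. Then for every X₀ ∈ 𝒳 there exists a maximal mild solution: there are t⁺(X₀) ∈ (0, T] and a mild solution X defined on I, where I = [0,T]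 or I = [0, t⁺(X₀)), such that every mild solution with initial datum X₀ defined on an interval J ⊆ [0,T] containing 0 is the restriction of X to J (in particular J ⊆ I). -/

import Mathlib

/-! Truncating the kernel outside a ball of radius `ρ` makes it globally Lipschitz, so that some
iterate of the Volterra operator is a contraction of `C([0, T], E)` and the truncated equation has a
solution on all of `[0, T]`. It agrees with any solution of the original equation for as long as
both stay in the ball, so every solution on `[0, b]` with `b < T` extends beyond `b`. By uniqueness
the solutions on the intervals `[0, b]` glue to a solution on the set of all such `b`, which, having
no largest element below `T`, is either `[0, T]` or half-open. -/

open MeasureTheory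

open Filter Function Metric Set Topology
open scoped NNReal

section OrderLemma

theorem eq_Icc_or_eq_Ico_csSup {α : Type*} [ConditionallyCompleteLinearOrder α] {S : Set α}
    {a b : α} (hS : S ⊆ Icc a b) (ha : a ∈ S) (hlower : ∀ x ∈ S, Icc a x ⊆ S)
    (hext : ∀ x ∈ S, x < b → ∃ y ∈ S, x < y) : S = Icc a b ∨ S = Ico a (sSup S) := by
  have hbdd : BddAbove S := bddAbove_Icc.mono hS
  by_cases hmem : sSup S ∈ S
  · have hsup : sSup S = b := by
      by_contra hne
      obtain ⟨y, hy, hlt⟩ := hext _ hmem ((hS hmem).2.lt_of_ne hne)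
      exact (le_csSup hbdd hy).not_gt hlt
    exact .inl (hS.antisymm (hlower b (hsup ▸ hmem)))
  · refine .inr (Subset.antisymm (fun x hx => ?_) fun x hx => ?_)
    · exact ⟨(hS hx).1, (le_csSup hbdd hx).lt_of_ne fun h => hmem (h ▸ hx)⟩
    · obtain ⟨y, hy, hxy⟩ := exists_lt_of_lt_csSup ⟨a, ha⟩ hx.2
      exact hlower y hy ⟨hx.1, hxy.le⟩

end OrderLemma

section IntegralInequality

open scoped Nat

variable {K C T t : ℝ}

theorem le_pow_div_factorial_of_le_integral {d : ℕ → ℝ → ℝ} (hK : 0 ≤ K)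
    (hd : ∀ n, ContinuousOn (d n) (Icc 0 T)) (h0 : ∀ t ∈ Icc 0 T, d 0 t ≤ C)
    (hsucc : ∀ n, ∀ t ∈ Icc 0 T, d (n + 1) t ≤ K * ∫ s in (0 : ℝ)..t, d n s)
    (n : ℕ) (ht : t ∈ Icc 0 T) : d n t ≤ C * ((K * t) ^ n / n !) := by
  induction n generalizing t with
  | zero => simpa using h0 t ht
  | succ n ih =>
    have hsub : Icc 0 t ⊆ Icc 0 T := Icc_subset_Icc_right ht.2
    calc d (n + 1) t ≤ K * ∫ s in (0 : ℝ)..t, d n s := hsucc n t ht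
      _ ≤ K * ∫ s in (0 : ℝ)..t, C * K ^ n / n ! * s ^ n := by
        gcongr
        refine intervalIntegral.integral_mono_on ht.1
          (((hd n).mono hsub).intervalIntegrable_of_Icc ht.1)
          (Continuous.intervalIntegrable (by fun_prop) _ _) fun s hs => (ih (hsub hs)).trans_eq ?_
        ring
      _ = C * ((K * t) ^ (n + 1) / (n + 1)!) := by
        rw [intervalIntegral.integral_const_mul, integral_pow, zero_pow n.succ_ne_zero,
          Nat.factorial_succ]
        push_cast
        field_simp
        ring

theorem nonpos_of_le_integral {d : ℝ → ℝ} (hK : 0 ≤ K) (hd : ContinuousOn d (Icc 0 T))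
    (h : ∀ t ∈ Icc 0 T, d t ≤ K * ∫ s in (0 : ℝ)..t, d s) (ht : t ∈ Icc 0 T) : d t ≤ 0 := by
  obtain ⟨C, hC⟩ := isCompact_Icc.exists_bound_of_continuousOn hd
  have hbound (n : ℕ) : d t ≤ C * ((K * t) ^ n / n !) :=
    le_pow_div_factorial_of_le_integral hK (fun _ => hd)
      (fun s hs => (le_abs_self _).trans (hC s hs)) (fun _ => h) n ht
  have hlim := (FloorSemiring.tendsto_pow_div_factorial_atTop (K * t)).const_mul C
  rw [mul_zero] at hlim
  exact ge_of_tendsto' hlim hbound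

end IntegralInequality

section FixedPoint

open scoped Nat

variable {E : Type*} [NormedAddCommGroup E] {K T : ℝ}

theorem norm_iterate_sub_le_of_norm_sub_le_integral (hT : 0 ≤ T) (hK : 0 ≤ K)
    {Φ : C(Icc 0 T, E) → C(Icc 0 T, E)}
    (hΦ : ∀ f g (t : Icc 0 T), ‖Φ f t - Φ g t‖ ≤
      K * ∫ s in (0 : ℝ)..t, ‖IccExtend hT f s - IccExtend hT g s‖)
    (f g : C(Icc 0 T, E)) (n : ℕ) (t : Icc 0 T) :
    ‖Φ^[n] f t - Φ^[n] g t‖ ≤ dist f g * ((K * t) ^ n / n !) := by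
  have hcont (h : C(Icc 0 T, E)) : Continuous (IccExtend hT h) := h.continuous.Icc_extend'
  have hbound := le_pow_div_factorial_of_le_integral (C := dist f g) hK
    (d := fun n s => ‖IccExtend hT (Φ^[n] f) s - IccExtend hT (Φ^[n] g) s‖)
    (fun n => ((hcont _).sub (hcont _)).norm.continuousOn)
    (fun s _ => (dist_eq_norm _ _).symm.trans_le (ContinuousMap.dist_apply_le_dist _))
    (fun n s hs => by
      simpa only [iterate_succ_apply', IccExtend_of_mem hT _ hs] using
        hΦ (Φ^[n] f) (Φ^[n] g) ⟨s, hs⟩)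
    n t.2
  simpa only [IccExtend_val] using hbound

theorem exists_isFixedPt_of_norm_sub_le_integral [CompleteSpace E] (hT : 0 ≤ T) (hK : 0 ≤ K)
    {Φ : C(Icc 0 T, E) → C(Icc 0 T, E)}
    (hΦ : ∀ f g (t : Icc 0 T), ‖Φ f t - Φ g t‖ ≤
      K * ∫ s in (0 : ℝ)..t, ‖IccExtend hT f s - IccExtend hT g s‖) :
    ∃ f, IsFixedPt Φ f := by
  obtain ⟨n, hn⟩ := ((FloorSemiring.tendsto_pow_div_factorial_atTop (K * T)).eventually
    (gt_mem_nhds one_pos)).exists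
  have hcontracting : ContractingWith ((K * T) ^ n / n !).toNNReal Φ^[n] := by
    refine ⟨Real.toNNReal_lt_one.2 hn, .of_dist_le' fun f g => ?_⟩
    refine (ContinuousMap.dist_le (by positivity)).2 fun t => ?_
    have ht0 : 0 ≤ (t : ℝ) := t.2.1
    have htT : (t : ℝ) ≤ T := t.2.2
    calc dist (Φ^[n] f t) (Φ^[n] g t) ≤ dist f g * ((K * t) ^ n / n !) :=
          (dist_eq_norm _ _).trans_le
            (norm_iterate_sub_le_of_norm_sub_le_integral hT hK hΦ f g n t)
      _ ≤ dist f g * ((K * T) ^ n / n !) := by gcongr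
      _ = (K * T) ^ n / n ! * dist f g := mul_comm _ _
  exact ⟨_, hcontracting.isFixedPt_fixedPoint_iterate⟩

end FixedPoint

section RadialRetraction

variable {E : Type*} [NormedAddCommGroup E] [NormedSpace ℝ E] {ρ : ℝ}

/-- The radial retraction of a normed space onto the closed ball of radius `ρ > 0` about `0`, used
to truncate kernels. It is written as a rescaling by `ρ / max ρ ‖x‖` so that no case distinction is
needed. -/
noncomputable def radialRetraction (ρ : ℝ) (x : E) : E := (ρ / max ρ ‖x‖) • x

theorem norm_radialRetraction_le (hρ : 0 < ρ) (x : E) : ‖radialRetraction ρ x‖ ≤ ρ := by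
  have hpos : 0 < max ρ ‖x‖ := lt_max_of_lt_left hρ
  rw [radialRetraction, norm_smul, Real.norm_of_nonneg (by positivity), div_mul_eq_mul_div,
    div_le_iff₀ hpos]
  gcongr
  exact le_max_right _ _

theorem radialRetraction_of_norm_le (hρ : 0 < ρ) {x : E} (hx : ‖x‖ ≤ ρ) :
    radialRetraction ρ x = x := by
  rw [radialRetraction, max_eq_left hx, div_self hρ.ne', one_smul]

theorem lipschitzWith_radialRetraction (hρ : 0 < ρ) :
    LipschitzWith 2 (radialRetraction ρ : E → E) := by
  refine LipschitzWith.of_dist_le_mul fun x y => ?_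
  rw [dist_eq_norm, dist_eq_norm, radialRetraction, radialRetraction]
  have hp : 0 < max ρ ‖x‖ := lt_max_of_lt_left hρ
  have hq : 0 < max ρ ‖y‖ := lt_max_of_lt_left hρ
  have hρp : ρ / max ρ ‖x‖ ≤ 1 := (div_le_one hp).2 (le_max_left _ _)
  have hyq : ‖y‖ / max ρ ‖y‖ ≤ 1 := (div_le_one hq).2 (le_max_right _ _)
  have hqp : |max ρ ‖y‖ - max ρ ‖x‖| ≤ ‖x - y‖ := by
    rw [max_comm ρ, max_comm ρ, norm_sub_rev]
    exact (abs_max_sub_max_le_abs _ _ _).trans (abs_norm_sub_norm_le y x)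
  set p := max ρ ‖x‖
  set q := max ρ ‖y‖
  calc ‖(ρ / p) • x - (ρ / q) • y‖ = ‖(ρ / p) • (x - y) + (ρ / p * ((q - p) / q)) • y‖ := by
        rw [show ρ / p * ((q - p) / q) = ρ / p - ρ / q by field_simp]
        congr 1
        module
    _ ≤ ‖(ρ / p) • (x - y)‖ + ‖(ρ / p * ((q - p) / q)) • y‖ := norm_add_le _ _
    _ = ρ / p * ‖x - y‖ + ρ / p * |q - p| * (‖y‖ / q) := by
        rw [norm_smul, norm_smul, Real.norm_of_nonneg (by positivity), Real.norm_eq_abs, abs_mul,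
          abs_of_nonneg (by positivity : 0 ≤ ρ / p), abs_div, abs_of_pos hq]
        ring
    _ ≤ 1 * ‖x - y‖ + 1 * ‖x - y‖ * 1 := by gcongr
    _ = (2 : ℝ≥0) * ‖x - y‖ := by push_cast; ring

end RadialRetraction

section TimeTriangle

variable {T : ℝ}

/-- The set of pairs of times `(t, s)` with `0 ≤ s ≤ t ≤ T`, on which evolution families and
Volterra kernels are defined; the later time comes first, as in `U(t, s)`. -/
def timeTriangle (T : ℝ) : Set (ℝ × ℝ) := {p | 0 ≤ p.2 ∧ p.2 ≤ p.1 ∧ p.1 ≤ T}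

theorem exists_continuous_retraction_timeTriangle (hT : 0 ≤ T) :
    ∃ r : ℝ × ℝ → ℝ × ℝ, Continuous r ∧ (∀ p, r p ∈ timeTriangle T) ∧
      ∀ p ∈ timeTriangle T, r p = p := by
  let c : ℝ → ℝ := fun t => max 0 (min t T)
  have hc0 (t : ℝ) : 0 ≤ c t := le_max_left _ _
  have hcT (t : ℝ) : c t ≤ T := max_le hT (min_le_right _ _)
  have hc {t : ℝ} (h0 : 0 ≤ t) (h1 : t ≤ T) : c t = t := by
    simp only [c, min_eq_left h1, max_eq_right h0]
  refine ⟨fun p => (c p.1, min (c p.2) (c p.1)), by fun_prop, fun p =>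
    ⟨le_min (hc0 _) (hc0 _), min_le_right _ _, hcT _⟩, fun p ⟨h0, hle, h1⟩ => ?_⟩
  simp only [hc (h0.trans hle) h1, hc h0 (hle.trans h1), min_eq_left hle]

theorem continuousOn_integral_of_continuousOn_timeTriangle {E : Type*} [NormedAddCommGroup E]
    [NormedSpace ℝ E] {g : ℝ × ℝ → E} (hg : ContinuousOn g (timeTriangle T)) :
    ContinuousOn (fun t => ∫ s in (0 : ℝ)..t, g (t, s)) (Icc 0 T) := by
  rcases lt_or_ge T 0 with hT | hT
  · simp only [Icc_eq_empty_of_lt hT, continuousOn_empty]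
  obtain ⟨r, hr, hmem, hid⟩ := exists_continuous_retraction_timeTriangle hT
  have hcont : Continuous fun t => ∫ s in (0 : ℝ)..t, g (r (t, s)) :=
    intervalIntegral.continuous_parametric_intervalIntegral_of_continuous
      (f := fun t s => g (r (t, s))) (hg.comp_continuous hr hmem) continuous_id
  refine hcont.continuousOn.congr fun t ht => intervalIntegral.integral_congr fun s hs => ?_
  rw [uIcc_of_le ht.1] at hs
  exact congrArg g (hid (t, s) ⟨hs.1, hs.2, ht.2⟩).symm

end TimeTriangle

section VolterraKernel

variable {E : Type*} [NormedAddCommGroup E] {H : ℝ → ℝ → E → E} {T ρ : ℝ}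

/-- A nonlinear Volterra kernel `H(t, s, x)` on `[0, T]`: jointly continuous for `0 ≤ s ≤ t ≤ T`,
and Lipschitz in `x` on balls uniformly in time. For the mild form of a semilinear evolution
equation, `H(t, s, x) = U(t, s) F(s, x)`. -/
structure IsVolterraKernel (T : ℝ) (H : ℝ → ℝ → E → E) : Prop where
  continuousOn : ContinuousOn (fun q : (ℝ × ℝ) × E => H q.1.1 q.1.2 q.2) (timeTriangle T ×ˢ univ)
  exists_lipschitzOnWith : ∀ ρ > 0, ∃ K : ℝ≥0, ∀ p ∈ timeTriangle T,
    LipschitzOnWith K (H p.1 p.2) (closedBall 0 ρ)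

theorem IsVolterraKernel.mono (hH : IsVolterraKernel T H) {b : ℝ} (hb : b ≤ T) :
    IsVolterraKernel b H := by
  have hsub : timeTriangle b ⊆ timeTriangle T := fun p ⟨h0, hle, hpb⟩ => ⟨h0, hle, hpb.trans hb⟩
  refine ⟨hH.continuousOn.mono (prod_mono_left hsub), fun ρ hρ => ?_⟩
  obtain ⟨K, hK⟩ := hH.exists_lipschitzOnWith ρ hρ
  exact ⟨K, fun p hp => hK p (hsub hp)⟩

theorem IsVolterraKernel.continuousOn_radialRetraction [NormedSpace ℝ E]
    (hH : IsVolterraKernel T H) (hρ : 0 < ρ) :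
    ContinuousOn (fun q : (ℝ × ℝ) × E => H q.1.1 q.1.2 (radialRetraction ρ q.2))
      (timeTriangle T ×ˢ univ) :=
  hH.continuousOn.comp
    (continuous_fst.prodMk
      ((lipschitzWith_radialRetraction hρ).continuous.comp continuous_snd)).continuousOn
    fun _ hq => ⟨hq.1, mem_univ _⟩

theorem IsVolterraKernel.exists_lipschitzWith_radialRetraction [NormedSpace ℝ E]
    (hH : IsVolterraKernel T H) (hρ : 0 < ρ) :
    ∃ K : ℝ≥0, ∀ p ∈ timeTriangle T, LipschitzWith K fun x => H p.1 p.2 (radialRetraction ρ x) := by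
  obtain ⟨K, hK⟩ := hH.exists_lipschitzOnWith ρ hρ
  refine ⟨K * 2, fun p hp => lipschitzOnWith_univ.1 ?_⟩
  exact (hK p hp).comp (lipschitzWith_radialRetraction hρ).lipschitzOnWith fun x _ =>
    mem_closedBall_zero_iff.2 (norm_radialRetraction_le hρ x)

theorem continuousOn_kernel_apply {X : ℝ → E}
    (hH : ContinuousOn (fun q : (ℝ × ℝ) × E => H q.1.1 q.1.2 q.2) (timeTriangle T ×ˢ univ))
    (hX : ContinuousOn X (Icc 0 T)) :
    ContinuousOn (fun p : ℝ × ℝ => H p.1 p.2 (X p.2)) (timeTriangle T) :=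
  hH.comp (f := fun p : ℝ × ℝ => (p, X p.2))
    (continuousOn_id.prodMk (hX.comp continuousOn_snd fun _ hp => ⟨hp.1, hp.2.1.trans hp.2.2⟩))
    fun _ hp => ⟨hp, mem_univ _⟩

theorem intervalIntegrable_kernel_apply {X : ℝ → E} {t : ℝ}
    (hH : ContinuousOn (fun q : (ℝ × ℝ) × E => H q.1.1 q.1.2 q.2) (timeTriangle T ×ˢ univ))
    (hX : ContinuousOn X (Icc 0 T)) (ht : t ∈ Icc 0 T) :
    IntervalIntegrable (fun s => H t s (X s)) volume 0 t :=
  ((continuousOn_kernel_apply hH hX).comp (f := fun s => (t, s)) (by fun_prop)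
    fun _ hs => ⟨hs.1, hs.2, ht.2⟩).intervalIntegrable_of_Icc ht.1

theorem continuousOn_clm_apply_of_norm_le {𝕜 A G : Type*} [NontriviallyNormedField 𝕜]
    [NormedSpace 𝕜 E] [NormedAddCommGroup G] [NormedSpace 𝕜 G] [TopologicalSpace A]
    {V : A → E →L[𝕜] G} {S : Set A} {M : ℝ} (hV : ∀ x, ContinuousOn (fun a => V a x) S)
    (hM : ∀ a ∈ S, ‖V a‖ ≤ M) : ContinuousOn (fun q : A × E => V q.1 q.2) (S ×ˢ univ) :=
  continuousOn_prod_of_continuousOn_lipschitzOnWith' _ M.toNNReal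
    (fun a ha => ((V a).lipschitz.weaken (NNReal.le_toNNReal_of_coe_le (hM a ha))).lipschitzOnWith)
    fun x _ => hV x

theorem isVolterraKernel_clm_apply {𝕜 : Type*} [NontriviallyNormedField 𝕜] [NormedSpace 𝕜 E]
    {U : ℝ → ℝ → E →L[𝕜] E} {F : ℝ → E → E} {M : ℝ}
    (hUcont : ∀ x, ContinuousOn (fun p : ℝ × ℝ => U p.1 p.2 x) (timeTriangle T))
    (hM : ∀ p ∈ timeTriangle T, ‖U p.1 p.2‖ ≤ M)
    (hF : ContinuousOn (fun p : ℝ × E => F p.1 p.2) (Icc 0 T ×ˢ univ))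
    (hLip : ∀ ρ > 0, ∃ K : ℝ≥0, ∀ s ∈ Icc 0 T, LipschitzOnWith K (F s) (closedBall 0 ρ)) :
    IsVolterraKernel T fun t s x => U t s (F s x) := by
  have hs {p : ℝ × ℝ} (hp : p ∈ timeTriangle T) : p.2 ∈ Icc 0 T := ⟨hp.1, hp.2.1.trans hp.2.2⟩
  refine ⟨?_, fun ρ hρ => ?_⟩
  · have hFcomp : ContinuousOn (fun q : (ℝ × ℝ) × E => (q.1, F q.1.2 q.2))
        (timeTriangle T ×ˢ univ) :=
      continuousOn_fst.prodMk (hF.comp (f := fun q : (ℝ × ℝ) × E => (q.1.2, q.2)) (by fun_prop)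
        fun _ hq => ⟨hs hq.1, mem_univ _⟩)
    exact (continuousOn_clm_apply_of_norm_le (V := fun p : ℝ × ℝ => U p.1 p.2) hUcont hM).comp
      hFcomp fun _ hq => ⟨hq.1, mem_univ _⟩
  · obtain ⟨K, hK⟩ := hLip ρ hρ
    refine ⟨M.toNNReal * K, fun p hp => ?_⟩
    exact ((U p.1 p.2).lipschitz.weaken
      (NNReal.le_toNNReal_of_coe_le (hM p hp))).comp_lipschitzOnWith (hK p.2 (hs hp))

end VolterraKernel

section VolterraEquation

variable {E : Type*} [NormedAddCommGroup E] [NormedSpace ℝ E] {φ : ℝ → E} {H H' : ℝ → ℝ → E → E}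
  {J J' : Set ℝ} {X Y : ℝ → E} {T b t : ℝ}

/-- The right-hand side `φ(t) + ∫₀ᵗ H(t, s, X(s)) ds` of a Volterra equation, as an operator on
paths `X`. -/
noncomputable def volterraOp (φ : ℝ → E) (H : ℝ → ℝ → E → E) (X : ℝ → E) (t : ℝ) : E :=
  φ t + ∫ s in (0 : ℝ)..t, H t s (X s)

/-- `X` is a continuous solution on `J` of the Volterra equation `X = volterraOp φ H X`; the values
of `X` outside `J` are irrelevant when `J` is an interval containing `0`. Mild solutions are the
case `φ(t) = U(t, 0) X₀`, `H(t, s, x) = U(t, s) F(s, x)`. -/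
structure IsVolterraSolOn (φ : ℝ → E) (H : ℝ → ℝ → E → E) (J : Set ℝ) (X : ℝ → E) : Prop where
  continuousOn : ContinuousOn X J
  eqOn : EqOn X (volterraOp φ H X) J

theorem continuousOn_volterraOp (hφ : ContinuousOn φ (Icc 0 T))
    (hH : ContinuousOn (fun q : (ℝ × ℝ) × E => H q.1.1 q.1.2 q.2) (timeTriangle T ×ˢ univ))
    (hX : ContinuousOn X (Icc 0 T)) : ContinuousOn (volterraOp φ H X) (Icc 0 T) :=
  hφ.add (continuousOn_integral_of_continuousOn_timeTriangle (continuousOn_kernel_apply hH hX))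

theorem norm_volterraOp_sub_le {K : ℝ≥0} {B : Set E}
    (hH : ContinuousOn (fun q : (ℝ × ℝ) × E => H q.1.1 q.1.2 q.2) (timeTriangle T ×ˢ univ))
    (hK : ∀ p ∈ timeTriangle T, LipschitzOnWith K (H p.1 p.2) B)
    (hX : ContinuousOn X (Icc 0 T)) (hY : ContinuousOn Y (Icc 0 T))
    (hXB : MapsTo X (Icc 0 T) B) (hYB : MapsTo Y (Icc 0 T) B) (ht : t ∈ Icc 0 T) :
    ‖volterraOp φ H X t - volterraOp φ H Y t‖ ≤ K * ∫ s in (0 : ℝ)..t, ‖X s - Y s‖ := by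
  have hsub : Icc 0 t ⊆ Icc 0 T := Icc_subset_Icc_right ht.2
  rw [volterraOp, volterraOp, add_sub_add_left_eq_sub,
    ← intervalIntegral.integral_sub (intervalIntegrable_kernel_apply hH hX ht)
      (intervalIntegrable_kernel_apply hH hY ht), ← intervalIntegral.integral_const_mul]
  refine intervalIntegral.norm_integral_le_of_norm_le ht.1 (.of_forall fun s hs => ?_)
    ((((hX.sub hY).norm.mono hsub).const_mul _).intervalIntegrable_of_Icc ht.1)
  have hsT : s ∈ Icc 0 T := hsub (Ioc_subset_Icc_self hs)
  exact (hK (t, s) ⟨hs.1.le, hs.2, ht.2⟩).norm_sub_le (hXB hsT) (hYB hsT)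

theorem exists_isVolterraSolOn_of_lipschitzWith [CompleteSpace E] {K : ℝ≥0} (hT : 0 ≤ T)
    (hφ : ContinuousOn φ (Icc 0 T))
    (hH : ContinuousOn (fun q : (ℝ × ℝ) × E => H q.1.1 q.1.2 q.2) (timeTriangle T ×ˢ univ))
    (hK : ∀ p ∈ timeTriangle T, LipschitzWith K (H p.1 p.2)) :
    ∃ X, IsVolterraSolOn φ H (Icc 0 T) X := by
  have hext (f : C(Icc 0 T, E)) : ContinuousOn (IccExtend hT f) (Icc 0 T) :=
    f.continuous.Icc_extend'.continuousOn
  let Φ : C(Icc 0 T, E) → C(Icc 0 T, E) := fun f =>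
    ⟨fun t => volterraOp φ H (IccExtend hT f) t,
      (continuousOn_volterraOp hφ hH (hext f)).domRestrict⟩
  obtain ⟨f, hf⟩ : ∃ f, IsFixedPt Φ f :=
    exists_isFixedPt_of_norm_sub_le_integral hT K.coe_nonneg fun f g t =>
      norm_volterraOp_sub_le hH (fun p hp => (hK p hp).lipschitzOnWith) (hext f) (hext g)
        (mapsTo_univ _ _) (mapsTo_univ _ _) t.2
  refine ⟨IccExtend hT f, hext f, fun t ht => ?_⟩
  rw [IccExtend_of_mem hT _ ht]
  exact (DFunLike.congr_fun hf ⟨t, ht⟩).symm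

namespace IsVolterraSolOn

theorem mono (hX : IsVolterraSolOn φ H J X) (hJ : J' ⊆ J) : IsVolterraSolOn φ H J' X :=
  ⟨hX.continuousOn.mono hJ, hX.eqOn.mono hJ⟩

theorem congr_kernel (hX : IsVolterraSolOn φ H (Icc 0 T) X)
    (hH : ∀ p ∈ timeTriangle T, H p.1 p.2 (X p.2) = H' p.1 p.2 (X p.2)) :
    IsVolterraSolOn φ H' (Icc 0 T) X := by
  refine ⟨hX.continuousOn, fun t ht => (hX.eqOn ht).trans ?_⟩
  refine congrArg (φ t + ·) (intervalIntegral.integral_congr fun s hs => ?_)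
  rw [uIcc_of_le ht.1] at hs
  exact hH (t, s) ⟨hs.1, hs.2, ht.2⟩

theorem congr (hX : IsVolterraSolOn φ H (Icc 0 T) X) (hXY : EqOn X Y (Icc 0 T)) :
    IsVolterraSolOn φ H (Icc 0 T) Y := by
  refine ⟨hX.continuousOn.congr hXY.symm, fun t ht => ?_⟩
  rw [← hXY ht, hX.eqOn ht]
  refine congrArg (φ t + ·) (intervalIntegral.integral_congr fun s hs => ?_)
  rw [uIcc_of_le ht.1] at hs
  exact congrArg (H t s) (hXY ⟨hs.1, hs.2.trans ht.2⟩)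

theorem of_forall_Icc (hJ : J ⊆ Ici 0) (hX : ∀ b ∈ J, IsVolterraSolOn φ H (Icc 0 b) X) :
    IsVolterraSolOn φ H J X := by
  refine ⟨fun t ht => ?_, fun t ht => (hX t ht).eqOn ⟨hJ ht, le_rfl⟩⟩
  by_cases hmax : ∃ b ∈ J, t < b
  · obtain ⟨b, hb, htb⟩ := hmax
    refine ((hX b hb).continuousOn t ⟨hJ ht, htb.le⟩).mono_of_mem_nhdsWithin ?_
    filter_upwards [self_mem_nhdsWithin, mem_nhdsWithin_of_mem_nhds (Iic_mem_nhds htb)]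
      with s hsJ hsb using ⟨hJ hsJ, hsb⟩
  · push Not at hmax
    exact ((hX t ht).continuousOn t ⟨hJ ht, le_rfl⟩).mono fun s hs => ⟨hJ hs, hmax s hs⟩

theorem unique (hH : IsVolterraKernel T H) (hX : IsVolterraSolOn φ H (Icc 0 T) X)
    (hY : IsVolterraSolOn φ H (Icc 0 T) Y) : EqOn X Y (Icc 0 T) := by
  obtain ⟨ρ, hρ, hbound⟩ : ∃ ρ > 0, ∀ x ∈ X '' Icc 0 T ∪ Y '' Icc 0 T, ‖x‖ ≤ ρ :=
    ((isCompact_Icc.image_of_continuousOn hX.continuousOn).union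
      (isCompact_Icc.image_of_continuousOn hY.continuousOn)).isBounded.exists_pos_norm_le
  obtain ⟨K, hK⟩ := hH.exists_lipschitzOnWith ρ hρ
  have hXB : MapsTo X (Icc 0 T) (closedBall 0 ρ) := fun t ht =>
    mem_closedBall_zero_iff.2 (hbound _ (.inl (mem_image_of_mem X ht)))
  have hYB : MapsTo Y (Icc 0 T) (closedBall 0 ρ) := fun t ht =>
    mem_closedBall_zero_iff.2 (hbound _ (.inr (mem_image_of_mem Y ht)))
  have hdiff (t) (ht : t ∈ Icc 0 T) : ‖X t - Y t‖ ≤ K * ∫ s in (0 : ℝ)..t, ‖X s - Y s‖ := by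
    conv_lhs => rw [hX.eqOn ht, hY.eqOn ht]
    exact norm_volterraOp_sub_le hH.continuousOn hK hX.continuousOn hY.continuousOn hXB hYB ht
  intro t ht
  exact sub_eq_zero.1 (norm_le_zero_iff.1 (nonpos_of_le_integral K.coe_nonneg
    (hX.continuousOn.sub hY.continuousOn).norm hdiff ht))

theorem exists_extension [CompleteSpace E] (hφ : ContinuousOn φ (Icc 0 T))
    (hH : IsVolterraKernel T H) (hb : b ∈ Ico 0 T) (hY : IsVolterraSolOn φ H (Icc 0 b) Y) :
    ∃ c ∈ Ioc b T, ∃ Z, IsVolterraSolOn φ H (Icc 0 c) Z := by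
  obtain ⟨ρ, hρ, hYρ⟩ : ∃ ρ > 0, ∀ x ∈ Y '' Icc 0 b, ‖x‖ < ρ :=
    (isCompact_Icc.image_of_continuousOn hY.continuousOn).isBounded.exists_pos_norm_lt
  rw [forall_mem_image] at hYρ
  obtain ⟨K, hK⟩ := hH.exists_lipschitzWith_radialRetraction hρ
  have hHρ := hH.continuousOn_radialRetraction hρ
  obtain ⟨Z, hZ⟩ := exists_isVolterraSolOn_of_lipschitzWith
    (H := fun t s x => H t s (radialRetraction ρ x)) (hb.1.trans hb.2.le) hφ hHρ hK
  have hYZ : EqOn Y Z (Icc 0 b) := by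
    have hHρ' : IsVolterraKernel T fun t s x => H t s (radialRetraction ρ x) :=
      ⟨hHρ, fun _ _ => ⟨K, fun p hp => (hK p hp).lipschitzOnWith⟩⟩
    refine unique (hHρ'.mono hb.2.le) (hY.congr_kernel fun p hp => ?_)
      (hZ.mono (Icc_subset_Icc_right hb.2.le))
    rw [radialRetraction_of_norm_le hρ (hYρ ⟨hp.1, hp.2.1.trans hp.2.2⟩).le]
  have hnear : ∀ᶠ t in 𝓝[≥] b, ‖Z t‖ < ρ := by
    have hZb : ‖Z b‖ < ρ := hYZ ⟨hb.1, le_rfl⟩ ▸ hYρ ⟨hb.1, le_rfl⟩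
    rw [← nhdsWithin_Icc_eq_nhdsGE hb.2]
    exact ((hZ.continuousOn b ⟨hb.1, hb.2.le⟩).mono (Icc_subset_Icc_left hb.1)).norm.eventually
      (gt_mem_nhds hZb)
  obtain ⟨u, hbu, hu⟩ := mem_nhdsGE_iff_exists_Icc_subset.1 hnear
  refine ⟨min u T, ⟨lt_min hbu hb.2, min_le_right _ _⟩, Z,
    (hZ.mono (Icc_subset_Icc_right (min_le_right _ _))).congr_kernel fun p hp => ?_⟩
  have hpu : p.2 ≤ u := hp.2.1.trans (hp.2.2.trans (min_le_left _ _))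
  have hZρ : ‖Z p.2‖ ≤ ρ := by
    rcases le_total p.2 b with hle | hle
    · exact hYZ ⟨hp.1, hle⟩ ▸ (hYρ ⟨hp.1, hle⟩).le
    · exact (hu ⟨hle, hpu⟩).le
  rw [radialRetraction_of_norm_le hρ hZρ]

end IsVolterraSolOn

/-- The maximal interval of existence within `[0, T]`: the times `b` up to which the Volterra
equation has a solution. -/
def maximalInterval (φ : ℝ → E) (H : ℝ → ℝ → E → E) (T : ℝ) : Set ℝ :=
  {b ∈ Icc 0 T | ∃ X, IsVolterraSolOn φ H (Icc 0 b) X}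

theorem zero_mem_maximalInterval (hT : 0 ≤ T) : 0 ∈ maximalInterval φ H T := by
  refine ⟨⟨le_rfl, hT⟩, fun _ => φ 0, continuousOn_const, fun t ht => ?_⟩
  obtain rfl : t = 0 := le_antisymm ht.2 ht.1
  simp only [volterraOp, intervalIntegral.integral_same, add_zero]

theorem exists_lt_mem_maximalInterval [CompleteSpace E] (hφ : ContinuousOn φ (Icc 0 T))
    (hH : IsVolterraKernel T H) (hb : b ∈ maximalInterval φ H T) (hbT : b < T) :
    ∃ c ∈ maximalInterval φ H T, b < c := by
  obtain ⟨⟨hb0, -⟩, Y, hY⟩ := hb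
  obtain ⟨c, ⟨hbc, hcT⟩, hZ⟩ := hY.exists_extension hφ hH ⟨hb0, hbT⟩
  exact ⟨c, ⟨⟨hb0.trans hbc.le, hcT⟩, hZ⟩, hbc⟩

theorem maximalInterval_eq_Icc_or_Ico [CompleteSpace E] (hT : 0 ≤ T)
    (hφ : ContinuousOn φ (Icc 0 T)) (hH : IsVolterraKernel T H) :
    maximalInterval φ H T = Icc 0 T ∨
      maximalInterval φ H T = Ico 0 (sSup (maximalInterval φ H T)) :=
  eq_Icc_or_eq_Ico_csSup (sep_subset _ _) (zero_mem_maximalInterval hT)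
    (fun _ ⟨hb, X, hX⟩ _ hc =>
      ⟨Icc_subset_Icc_right hb.2 hc, X, hX.mono (Icc_subset_Icc_right hc.2)⟩)
    fun _ hb => exists_lt_mem_maximalInterval hφ hH hb

theorem exists_isVolterraSolOn_maximalInterval (hH : IsVolterraKernel T H) :
    ∃ X, IsVolterraSolOn φ H (maximalInterval φ H T) X := by
  choose! Y hY using fun b (hb : b ∈ maximalInterval φ H T) => hb.2
  refine ⟨fun t => Y t t, .of_forall_Icc (fun t ht => ht.1.1) fun b hb => (hY b hb).congr ?_⟩
  intro t ht
  have htT : t ≤ T := ht.2.trans hb.1.2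
  have hYb : IsVolterraSolOn φ H (Icc 0 t) (Y b) := (hY b hb).mono (Icc_subset_Icc_right ht.2)
  exact hYb.unique (hH.mono htT) (hY t ⟨⟨ht.1, htT⟩, Y b, hYb⟩) ⟨ht.1, le_rfl⟩

theorem IsVolterraSolOn.subset_maximalInterval_and_eqOn (hH : IsVolterraKernel T H)
    (hX : IsVolterraSolOn φ H (maximalInterval φ H T) X) (hJ : J ⊆ Icc 0 T) (h0 : 0 ∈ J)
    (hJconn : J.OrdConnected) (hY : IsVolterraSolOn φ H J Y) :
    J ⊆ maximalInterval φ H T ∧ EqOn Y X J := by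
  have hYt (t) (ht : t ∈ J) : IsVolterraSolOn φ H (Icc 0 t) Y := hY.mono (hJconn.out h0 ht)
  have hsub : J ⊆ maximalInterval φ H T := fun t ht => ⟨hJ ht, Y, hYt t ht⟩
  refine ⟨hsub, fun t ht => ?_⟩
  exact (hYt t ht).unique (hH.mono (hJ ht).2) (hX.mono ((hJconn.out h0 ht).trans hsub))
    ⟨(hJ ht).1, le_rfl⟩

theorem maximal_mild_solution_exists_general [CompleteSpace E] (hT : 0 < T)
    (hφ : ContinuousOn φ (Icc 0 T)) (hH : IsVolterraKernel T H) :
    ∃ (tp : ℝ) (I : Set ℝ) (X : ℝ → E), 0 < tp ∧ tp ≤ T ∧ (I = Icc 0 T ∨ I = Ico 0 tp) ∧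
      ContinuousOn X I ∧ (∀ t ∈ I, X t = φ t + ∫ s in (0 : ℝ)..t, H t s (X s)) ∧
      ∀ (J : Set ℝ) (Y : ℝ → E), J ⊆ Icc 0 T → 0 ∈ J → J.OrdConnected → ContinuousOn Y J →
        (∀ t ∈ J, Y t = φ t + ∫ s in (0 : ℝ)..t, H t s (Y s)) → J ⊆ I ∧ EqOn Y X J := by
  have h0 : 0 ∈ maximalInterval φ H T := zero_mem_maximalInterval hT.le
  have hsub : maximalInterval φ H T ⊆ Icc 0 T := sep_subset _ _
  obtain ⟨b, hb, hb0⟩ := exists_lt_mem_maximalInterval hφ hH h0 hT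
  obtain ⟨X, hX⟩ := exists_isVolterraSolOn_maximalInterval (φ := φ) hH
  exact ⟨sSup (maximalInterval φ H T), maximalInterval φ H T, X,
    hb0.trans_le (le_csSup (bddAbove_Icc.mono hsub) hb),
    csSup_le ⟨0, h0⟩ fun c hc => (hsub hc).2,
    maximalInterval_eq_Icc_or_Ico hT.le hφ hH, hX.continuousOn, hX.eqOn,
    fun J Y hJ h0J hJconn hYcont hY =>
      hX.subset_maximalInterval_and_eqOn hH hJ h0J hJconn ⟨hYcont, hY⟩⟩

end VolterraEquation

/-- Existence and uniqueness of the maximal mild solution of the semilinear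
non-autonomous evolution equation: there is a mild solution defined on `[0,T]` or on
`[0, t⁺(X₀))` of which every mild solution with the same initial datum is a
restriction. -/
theorem maximal_mild_solution_exists {𝒳 : Type*} [NormedAddCommGroup 𝒳]
    [NormedSpace ℂ 𝒳] [CompleteSpace 𝒳]
    (T : ℝ) (hT : 0 < T)
    (U : ℝ → ℝ → 𝒳 →L[ℂ] 𝒳)
    (hUcomp : ∀ s r t : ℝ, 0 ≤ s → s ≤ r → r ≤ t → t ≤ T →
      (U t r).comp (U r s) = U t s)
    (hUid : ∀ s : ℝ, 0 ≤ s → s ≤ T → U s s = ContinuousLinearMap.id ℂ 𝒳)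
    (hUcont : ∀ x : 𝒳, ContinuousOn (fun p : ℝ × ℝ => U p.1 p.2 x)
      {p : ℝ × ℝ | 0 ≤ p.2 ∧ p.2 ≤ p.1 ∧ p.1 ≤ T})
    (M₀ : ℝ) (hM₀ : ∀ s t : ℝ, 0 ≤ s → s ≤ t → t ≤ T → ‖U t s‖ ≤ M₀)
    (F : ℝ → 𝒳 → 𝒳)
    (hF : ContinuousOn (fun p : ℝ × 𝒳 => F p.1 p.2) (Set.Icc 0 T ×ˢ Set.univ))
    (hF0 : ∀ t ∈ Set.Icc (0:ℝ) T, F t 0 = 0)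
    (L : ℝ → ℝ → ℝ)
    (hL0 : ∀ τ ρ : ℝ, 0 < τ → τ ≤ T → 0 < ρ → 0 ≤ L τ ρ)
    (hLmono : ∀ τ₁ τ₂ ρ₁ ρ₂ : ℝ, 0 < τ₁ → τ₁ ≤ τ₂ → τ₂ ≤ T → 0 < ρ₁ → ρ₁ ≤ ρ₂ →
      L τ₁ ρ₁ ≤ L τ₂ ρ₂)
    (hLip : ∀ τ ρ : ℝ, 0 < τ → τ ≤ T → 0 < ρ → ∀ t ∈ Set.Icc (0:ℝ) τ, ∀ x y : 𝒳,
      ‖x‖ ≤ ρ → ‖y‖ ≤ ρ → ‖F t x - F t y‖ ≤ L τ ρ * ‖x - y‖)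
    (X₀ : 𝒳) :
    ∃ (tp : ℝ) (I : Set ℝ) (X : ℝ → 𝒳),
      0 < tp ∧ tp ≤ T ∧
      (I = Set.Icc 0 T ∨ I = Set.Ico 0 tp) ∧
      ContinuousOn X I ∧
      (∀ t ∈ I, X t = U t 0 X₀ + ∫ s in (0:ℝ)..t, U t s (F s (X s))) ∧
      ∀ (J : Set ℝ) (Y : ℝ → 𝒳), J ⊆ Set.Icc 0 T → (0:ℝ) ∈ J → J.OrdConnected →
        ContinuousOn Y J →
        (∀ t ∈ J, Y t = U t 0 X₀ + ∫ s in (0:ℝ)..t, U t s (F s (Y s))) →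
        J ⊆ I ∧ ∀ t ∈ J, Y t = X t := by
  have hLipBall : ∀ ρ > 0, ∃ K : ℝ≥0, ∀ t ∈ Icc 0 T, LipschitzOnWith K (F t) (closedBall 0 ρ) :=
    fun ρ hρ => ⟨(L T ρ).toNNReal, fun t ht => .of_dist_le' fun x hx y hy => by
      simpa only [dist_eq_norm] using hLip T ρ hT le_rfl hρ t ht x y
        (mem_closedBall_zero_iff.1 hx) (mem_closedBall_zero_iff.1 hy)⟩
  have hφ : ContinuousOn (fun t => U t 0 X₀) (Icc 0 T) :=
    (hUcont X₀).comp (f := fun t => (t, 0)) (by fun_prop) fun t ht => ⟨le_rfl, ht.1, ht.2⟩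
  exact maximal_mild_solution_exists_general hT hφ <|
    isVolterraKernel_clm_apply hUcont (fun p hp => hM₀ p.2 p.1 hp.1 hp.2.1 hp.2.2) hF hLipBall
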